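/- Let n > 4, let L = H(n) over ℂ with ℤ-grading L = ⊕_{j=−1}^{ξ_H} L_j where ξ_H = n−3, and let −1 ≤ k, l ≤ ξ_H with k + l = ξ_H. If x ∈ L_k satisfies [x, L_l] = 0, then x = 0. -/

import Mathlib

open scoped BigOperators

noncomputable section

namespace CartanSuper

/-- Coordinates of the exterior algebra `Λ(n)` with respect to the monomial basis
`{x_S : S ⊆ {1,…,n}}`. -/
abbrev Lambda (n : ℕ) := Finset (Fin n) → ℂ

/-- Endomorphism algebra of `Λ(n)`. -/
abbrev E (n : ℕ) := Module.End ℂ (Lambda n)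

variable (n : ℕ)

/-- `(−1)^k`. -/
def msign (k : ℕ) : ℂ := (-1 : ℂ) ^ k

/-- The basis monomial `x_S = x_{i₁}⋯x_{i_k}` (indices in increasing order). -/
def mono (S : Finset (Fin n)) : Lambda n := fun T => if T = S then 1 else 0

/-- Number of inversions between `S` and `T`. -/
def inversions (S T : Finset (Fin n)) : ℕ := ((S ×ˢ T).filter fun p => p.2 < p.1).card

/-- The multiplication of `Λ(n)` in coordinates:
`x_S · x_T = (−1)^{inversions} x_{S ∪ T}` for disjoint `S, T` and `0` otherwise. -/
def lmulFun (f g : Lambda n) : Lambda n :=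
  fun U => ∑ S ∈ U.powerset, msign (inversions n S (U \ S)) * f S * g (U \ S)

/-- Left multiplication by an element of `Λ(n)`, as a linear map `Λ(n) →ₗ End Λ(n)`. -/
def mulOp : Lambda n →ₗ[ℂ] E n where
  toFun f :=
    { toFun := lmulFun n f
      map_add' := by
        intro g h; funext U
        simp [lmulFun, mul_add, Finset.sum_add_distrib]
      map_smul' := by
        intro c g; funext U
        simp only [lmulFun, Pi.smul_apply, smul_eq_mul, RingHom.id_apply, Finset.mul_sum]
        exact Finset.sum_congr rfl (by intros; ring) }
  map_add' := by
    intro f g; apply LinearMap.ext; intro h; funext U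
    show lmulFun n (f + g) h U = lmulFun n f h U + lmulFun n g h U
    simp only [lmulFun]
    rw [← Finset.sum_add_distrib]
    exact Finset.sum_congr rfl (by intros; simp [Pi.add_apply]; ring)
  map_smul' := by
    intro c f; apply LinearMap.ext; intro h; funext U
    show lmulFun n (c • f) h U = (c • lmulFun n f h) U
    simp only [lmulFun, Pi.smul_apply, smul_eq_mul, Finset.mul_sum]
    exact Finset.sum_congr rfl (by intros; ring)

/-- The superderivation `∂_i` of `Λ(n)`, in coordinates. -/
def pd (i : Fin n) : E n where
  toFun f := fun S =>
    if i ∈ S then 0 else msign (S.filter (· < i)).card * f (insert i S)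
  map_add' := by
    intro f g; funext S; by_cases h : i ∈ S <;> simp [h, mul_add]
  map_smul' := by
    intro c f; funext S; by_cases h : i ∈ S <;> simp [h] <;> ring

/-- The parity operator `σ` of `Λ(n)`: `σ(x_S) = (−1)^{|S|} x_S`. -/
def par : E n where
  toFun f := fun S => msign S.card * f S
  map_add' := by intro f g; funext S; simp [mul_add]
  map_smul' := by intro c f; funext S; simp; ring

/-- The super-commutator `[D,F] = D∘F − (−1)^{|D||F|} F∘D`, extended bilinearly to all of
`End Λ(n)` using the parity operator `σ`
(for homogeneous `D`, `σ∘D∘σ = (−1)^{|D|} D`). -/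
def sbFun (D F : E n) : E n :=
  D * F - (2:ℂ)⁻¹ • ((F + par n * F * par n) * D + (F - par n * F * par n) * (par n * D * par n))

/-- The super-commutator as a bilinear map. -/
def sbL : E n →ₗ[ℂ] E n →ₗ[ℂ] E n :=
  LinearMap.mk₂ ℂ (sbFun n)
    (fun D D' F => by
      simp only [sbFun, add_mul, sub_mul, mul_add, mul_sub, smul_mul_assoc, mul_smul_comm,
        smul_add, smul_sub]
      module)
    (fun c D F => by
      simp only [sbFun, add_mul, sub_mul, mul_add, mul_sub, smul_mul_assoc, mul_smul_comm,
        smul_add, smul_sub]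
      module)
    (fun D F F' => by
      simp only [sbFun, add_mul, sub_mul, mul_add, mul_sub, smul_mul_assoc, mul_smul_comm,
        smul_add, smul_sub]
      module)
    (fun c D F => by
      simp only [sbFun, add_mul, sub_mul, mul_add, mul_sub, smul_mul_assoc, mul_smul_comm,
        smul_add, smul_sub]
      module)

/-- Shorthand for the super-commutator. -/
def sb (D F : E n) : E n := sbL n D F

/-- The ℤ₂-homogeneous component of `Λ(n)` of parity `p`. -/
def lpar (p : ZMod 2) : Submodule ℂ (Lambda n) where
  carrier := {f | ∀ S : Finset (Fin n), (S.card : ZMod 2) ≠ p → f S = 0}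
  add_mem' := by intro f g hf hg S hS; simp [Pi.add_apply, hf S hS, hg S hS]
  zero_mem' := by intro S hS; rfl
  smul_mem' := by intro c f hf S hS; simp [Pi.smul_apply, hf S hS]

/-- The ℤ-homogeneous component of `Λ(n)` of degree `m` (zero unless `0 ≤ m ≤ n`). -/
def ldeg (m : ℤ) : Submodule ℂ (Lambda n) where
  carrier := {f | ∀ S : Finset (Fin n), (S.card : ℤ) ≠ m → f S = 0}
  add_mem' := by intro f g hf hg S hS; simp [Pi.add_apply, hf S hS, hg S hS]
  zero_mem' := by intro S hS; rfl
  smul_mem' := by intro c f hf S hS; simp [Pi.smul_apply, hf S hS]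

/-- Endomorphisms of `Λ(n)` that are ℤ₂-homogeneous of parity `p`. -/
def epar (p : ZMod 2) : Submodule ℂ (E n) where
  carrier := {D | ∀ (q : ZMod 2), ∀ f ∈ lpar n q, D f ∈ lpar n (q + p)}
  add_mem' := by
    intro D F hD hF q f hf
    simpa [LinearMap.add_apply] using (lpar n (q + p)).add_mem (hD q f hf) (hF q f hf)
  zero_mem' := by intro q f hf; simpa using (lpar n (q + p)).zero_mem
  smul_mem' := by
    intro c D hD q f hf
    simpa [LinearMap.smul_apply] using (lpar n (q + p)).smul_mem c (hD q f hf)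

/-- Endomorphisms of `Λ(n)` that are ℤ-homogeneous of degree `d`. -/
def edeg (d : ℤ) : Submodule ℂ (E n) where
  carrier := {D | ∀ (m : ℤ), ∀ f ∈ ldeg n m, D f ∈ ldeg n (m + d)}
  add_mem' := by
    intro D F hD hF m f hf
    simpa [LinearMap.add_apply] using (ldeg n (m + d)).add_mem (hD m f hf) (hF m f hf)
  zero_mem' := by intro m f hf; simpa using (ldeg n (m + d)).zero_mem
  smul_mem' := by
    intro c D hD m f hf
    simpa [LinearMap.smul_apply] using (ldeg n (m + d)).smul_mem c (hD m f hf)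

/-- The linear map `(f₁,…,f_n) ↦ ∑ᵢ fᵢ ∂ᵢ`. -/
def Wmap : (Fin n → Lambda n) →ₗ[ℂ] E n where
  toFun F := ∑ i, mulOp n (F i) * pd n i
  map_add' := by
    intro F G
    simp only [Pi.add_apply, map_add, add_mul, Finset.sum_add_distrib]
  map_smul' := by
    intro c F
    simp only [RingHom.id_apply, Pi.smul_apply, map_smul, smul_mul_assoc, Finset.smul_sum]

/-- The divergence `(f₁,…,f_n) ↦ ∑ᵢ ∂ᵢ(fᵢ)`. -/
def divMap : (Fin n → Lambda n) →ₗ[ℂ] Lambda n where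
  toFun F := ∑ i, pd n i (F i)
  map_add' := by
    intro F G
    simp only [Pi.add_apply, map_add, Finset.sum_add_distrib]
  map_smul' := by
    intro c F
    simp only [RingHom.id_apply, Pi.smul_apply, map_smul, Finset.smul_sum]

/-- The Witt type Lie superalgebra `W(n) = {∑ fᵢ∂ᵢ : fᵢ ∈ Λ(n)}`. -/
def Wn : Submodule ℂ (E n) := LinearMap.range (Wmap n)

/-- Divergence-free coefficient tuples. -/
def divFree : Submodule ℂ (Fin n → Lambda n) := LinearMap.ker (divMap n)

/-- The special type Lie superalgebra `S(n) = {∑ fᵢ∂ᵢ : ∑ ∂ᵢ(fᵢ) = 0}`. -/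
def Sn : Submodule ℂ (E n) := (divFree n).map (Wmap n)

/-- The top monomial `ω = x₁x₂⋯x_n`. -/
def omegaTop : Lambda n := mono n Finset.univ

/-- `1 − x₁x₂⋯x_n`. -/
def oneM : Lambda n := mono n ∅ - omegaTop n

/-- Multiplication of every coefficient by `1 − x₁⋯x_n`. -/
def oneMScale : (Fin n → Lambda n) →ₗ[ℂ] (Fin n → Lambda n) :=
  LinearMap.pi fun i => (mulOp n (oneM n)) ∘ₗ LinearMap.proj i

/-- The Lie superalgebra `S̃(n) = {(1−x₁⋯x_n)∑ fᵢ∂ᵢ : ∑ ∂ᵢ(fᵢ) = 0}` (`n` even). -/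
def Stn : Submodule ℂ (E n) := (divFree n).map (Wmap n ∘ₗ oneMScale n)

/-- The conjugate index `i'`. -/
def cidx (i : Fin n) : Fin n :=
  ⟨if i.val < n / 2 then i.val + n / 2 else if i.val < 2 * (n / 2) then i.val - n / 2 else i.val,
   by have := i.isLt; split_ifs <;> omega⟩

/-- The linear map `f ↦ D_H(f) = (−1)^{|f|} ∑ᵢ ∂ᵢ(f)∂_{i'}` (the sign is implemented by the
parity operator `σ`, so that this is a single linear map agreeing with `D_H` on homogeneous
elements). -/
def DHmap : Lambda n →ₗ[ℂ] E n where
  toFun f := ∑ i, mulOp n (pd n i (par n f)) * pd n (cidx n i)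
  map_add' := by
    intro f g
    simp only [map_add, add_mul, Finset.sum_add_distrib]
  map_smul' := by
    intro c f
    simp only [RingHom.id_apply, map_smul, smul_mul_assoc, Finset.smul_sum]

/-- Evaluation of the top coefficient. -/
def evalTop : Lambda n →ₗ[ℂ] ℂ := LinearMap.proj Finset.univ

/-- The Hamiltonian Lie superalgebra `H(n) = {D_H(f) : f ∈ ⊕_{i=0}^{n−1} Λ(n)_i}`. -/
def Hn : Submodule ℂ (E n) := (LinearMap.ker (evalTop n)).map (DHmap n)

/-- `H̃(n) = {D_H(f) : f ∈ Λ(n)}`. -/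
def HtN : Submodule ℂ (E n) := LinearMap.range (DHmap n)

/-- The degree derivation `𝒞 = ∑ᵢ xᵢ∂ᵢ`. -/
def CC : E n := ∑ i, mulOp n (mono n {i}) * pd n i

/-- The span of the diagonal elements `xᵢ∂ᵢ`. -/
def diagSpan : Submodule ℂ (E n) :=
  Submodule.span ℂ (Set.range fun i : Fin n => mulOp n (mono n {i}) * pd n i)

/-- The four families of Cartan type Lie superalgebras. -/
inductive CT | W | S | St | H
deriving DecidableEq

/-- Validity of the parameter `n` for each family. -/
def CT.valid : CT → ℕ → Prop
  | .W, n => 4 ≤ n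
  | .S, n => 4 ≤ n
  | .St, n => 4 ≤ n ∧ Even n
  | .H, n => 4 < n

/-- The Cartan type Lie superalgebra `L` itself. -/
def CT.algebra : CT → (n : ℕ) → Submodule ℂ (E n)
  | .W, n => Wn n
  | .S, n => Sn n
  | .St, n => Stn n
  | .H, n => Hn n

/-- The extended algebra `L'`: `L' = L` for `W(n)` and `S̃(n)`, `L' = S(n) ⊕ ℂ𝒞` for `S(n)`,
and `L' = H̃(n) ⊕ ℂ𝒞` for `H(n)`. -/
def CT.prime : CT → (n : ℕ) → Submodule ℂ (E n)
  | .W, n => Wn n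
  | .S, n => Sn n ⊔ Submodule.span ℂ {CC n}
  | .St, n => Stn n
  | .H, n => HtN n ⊔ Submodule.span ℂ {CC n}

/-- The top degree `ξ_L` of the ℤ-grading. -/
def CT.xi : CT → (n : ℕ) → ℤ
  | .W, n => (n : ℤ) - 1
  | .S, n => (n : ℤ) - 2
  | .St, n => (n : ℤ) - 2
  | .H, n => (n : ℤ) - 3

/-- The ℤ-grading component `L_j = L ∩ W(n)_j`; for `S̃(n)` the component of degree `−1`
is `span{(1−x₁⋯x_n)∂ᵢ}` instead. -/
def CT.grade (t : CT) (n : ℕ) (j : ℤ) : Submodule ℂ (E n) :=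
  match t with
  | .St =>
      if j = -1 then
        Submodule.span ℂ (Set.range fun i : Fin n => mulOp n (oneM n) * pd n i)
      else Stn n ⊓ edeg n j
  | t => t.algebra n ⊓ edeg n j

/-- The ℤ-grading component `L'_j` of the extended algebra `L'`. -/
def CT.grade' (t : CT) (n : ℕ) (j : ℤ) : Submodule ℂ (E n) :=
  match t with
  | .St => CT.grade .St n j
  | t => t.prime n ⊓ edeg n j

/-- The standard Cartan subalgebra `H_L` of `L`: the part of the diagonal
`span{xᵢ∂ᵢ}` lying in `L`. -/
def CT.cartan (t : CT) (n : ℕ) : Submodule ℂ (E n) := t.algebra n ⊓ diagSpan n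

/-- The weight space of `M ⊆ End Λ(n)` of weight `μ ∈ H_L^*` under the adjoint action
of the standard Cartan subalgebra of `L`. -/
def wtsp (t : CT) (n : ℕ) (M : Submodule ℂ (E n)) (μ : Module.Dual ℂ (t.cartan n)) :
    Submodule ℂ (E n) where
  carrier := {x | x ∈ M ∧ ∀ h : t.cartan n, sbL n h x = μ h • x}
  add_mem' := by
    rintro x y ⟨hx, hx'⟩ ⟨hy, hy'⟩
    exact ⟨M.add_mem hx hy, fun h => by simp [map_add, hx' h, hy' h, smul_add]⟩
  zero_mem' := ⟨M.zero_mem, fun h => by simp⟩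
  smul_mem' := by
    rintro c x ⟨hx, hx'⟩
    exact ⟨M.smul_mem c hx, fun h => by simp [map_smul, hx' h, smul_comm c]⟩

/-- The set of roots of `M` with respect to the standard Cartan subalgebra of `L`:
the nonzero weights with nonzero weight space. -/
def CT.roots (t : CT) (n : ℕ) (M : Submodule ℂ (E n)) : Set (Module.Dual ℂ (t.cartan n)) :=
  {ε | ε ≠ 0 ∧ wtsp t n M ε ≠ ⊥}

/-- The sign `(−1)^p` for `p ∈ ℤ₂`. -/
def sgn (p : ZMod 2) : ℂ := (-1 : ℂ) ^ p.val

/-- `f` is a super-biderivation of `L` of ℤ₂-degree `pf`: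
a bilinear map with `f(L_α, L_β) ⊆ L_{α+β+pf}` satisfying
`f([x,y],z) = (−1)^{|x||f|}[x,f(y,z)] + (−1)^{|y||z|}[f(x,z),y]` and
`f(x,[y,z]) = [f(x,y),z] + (−1)^{(|f|+|x|)|y|}[y,f(x,z)]` for homogeneous `x,y,z ∈ L`.
(The bilinear map is given as a bilinear map on the ambient space `End Λ(n)`;
only its restriction to `L` is relevant.) -/
structure IsSuperBider (L : Submodule ℂ (E n)) (pf : ZMod 2)
    (f : E n →ₗ[ℂ] E n →ₗ[ℂ] E n) : Prop where
  maps : ∀ (α β : ZMod 2), ∀ x ∈ L ⊓ epar n α, ∀ y ∈ L ⊓ epar n β,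
    f x y ∈ L ⊓ epar n (α + β + pf)
  eq1 : ∀ (α β γ : ZMod 2), ∀ x ∈ L ⊓ epar n α, ∀ y ∈ L ⊓ epar n β, ∀ z ∈ L ⊓ epar n γ,
    f (sbL n x y) z = sgn (α * pf) • sbL n x (f y z) + sgn (β * γ) • sbL n (f x z) y
  eq2 : ∀ (α β γ : ZMod 2), ∀ x ∈ L ⊓ epar n α, ∀ y ∈ L ⊓ epar n β, ∀ z ∈ L ⊓ epar n γ,
    f x (sbL n y z) = sbL n (f x y) z + sgn ((pf + α) * β) • sbL n y (f x z)

/-- `D` is a superderivation of `L` of ℤ₂-degree `p`: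
`D(L_α) ⊆ L_{α+p}` and `D([x,y]) = [D(x),y] + (−1)^{|D||x|}[x,D(y)]` for homogeneous
`x, y ∈ L`. (Given as a linear map on the ambient space `End Λ(n)`.) -/
structure IsSuperDer (L : Submodule ℂ (E n)) (p : ZMod 2)
    (D : E n →ₗ[ℂ] E n) : Prop where
  maps : ∀ (α : ZMod 2), ∀ x ∈ L ⊓ epar n α, D x ∈ L ⊓ epar n (α + p)
  leib : ∀ (α β : ZMod 2), ∀ x ∈ L ⊓ epar n α, ∀ y ∈ L ⊓ epar n β,
    D (sbL n x y) = sbL n (D x) y + sgn (p * α) • sbL n x (D y)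

/-- `f ∈ BDer(L)_ε`: the super-biderivation `f` has weight `ε ∈ H_L^*`, i.e.
`f(L_η, L_ζ) ⊆ L_{ε+η+ζ}` for all weights `η, ζ`. -/
def CT.HasWeight (t : CT) (n : ℕ) (f : E n →ₗ[ℂ] E n →ₗ[ℂ] E n)
    (ε : Module.Dual ℂ (t.cartan n)) : Prop :=
  ∀ (η ζ : Module.Dual ℂ (t.cartan n)),
    ∀ x ∈ wtsp t n (t.algebra n) η, ∀ y ∈ wtsp t n (t.algebra n) ζ,
      f x y ∈ wtsp t n (t.algebra n) (ε + η + ζ)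

/-- `f ∈ BDer(L)_i`: the super-biderivation `f` has ℤ-degree `i`, i.e.
`f(L_j, L_k) ⊆ L_{i+j+k}` for all `j, k ∈ ℤ`. -/
def CT.HasDeg (t : CT) (n : ℕ) (f : E n →ₗ[ℂ] E n →ₗ[ℂ] E n) (i : ℤ) : Prop :=
  ∀ (j k : ℤ), ∀ x ∈ t.grade n j, ∀ y ∈ t.grade n k, f x y ∈ t.grade n (i + j + k)

/-!
Put `{f, g} = D_H(f)(g)`. The operators `[D_H(f), D_H(g)]` and `D_H({f, g})` agree on every
generator `x_m`, where the latter is `∂_{m'}{f, g}` up to sign. So if `[D_H(f), D_H(g)] = 0`, all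
derivatives of `{f, g}` vanish and `{f, g}` is a constant. On the other hand `∑ᵢ ∂_{i'}∂ᵢ = 0`, so
`{f, g} = -∑ᵢ ∂_{i'}(∂ᵢ(f) g)` is a divergence, and its coefficient at `∏_{j ≠ i'} x_j` is, up to
sign, the top coefficient of `∂ᵢ(f) g`. Hence if `[D_H(f), L_l] = 0`, then `∂ᵢ(f)` is orthogonal
to every monomial of degree `l + 2` under the pairing `(u, v) ↦ (top coefficient of u v)`. As
`∂ᵢ(f)` is homogeneous of the complementary degree `k + 1`, it vanishes for every `i`, and so does
`D_H(f)`.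

Signs are kept track of through the parity operator `σ = par n`, so that the identities hold for
inhomogeneous elements.
-/

section

variable {n}

theorem msign_add (a b : ℕ) : msign (a + b) = msign a * msign b := pow_add _ _ _

theorem msign_mul_self (a : ℕ) : msign a * msign a = 1 := by
  rw [← msign_add]
  exact Even.neg_one_pow ⟨a, rfl⟩

theorem msign_ne_zero (a : ℕ) : msign a ≠ 0 := left_ne_zero_of_mul_eq_one (msign_mul_self a)

theorem msign_one : msign 1 = -1 := pow_one _

theorem msign_eq_mul_of_add_eq {a b c : ℕ} (h : a + b = c) : msign a = msign c * msign b := by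
  rw [← h, msign_add, mul_assoc, msign_mul_self, mul_one]

theorem msign_mul (a b : ℕ) :
    msign (a * b) = (2 : ℂ)⁻¹ * ((1 + msign a) + (1 - msign a) * msign b) := by
  have hpow : msign (a * b) = msign a ^ b := pow_mul _ _ _
  have hcases : msign a = 1 ∨ msign a = -1 := neg_one_pow_eq_or ℂ a
  rcases hcases with ha | ha
  · rw [hpow, ha, one_pow]
    norm_num
  · rw [hpow, ha, msign]
    ring

theorem inversions_union_left {S S' : Finset (Fin n)} (h : Disjoint S S') (T : Finset (Fin n)) :
    inversions n (S ∪ S') T = inversions n S T + inversions n S' T := by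
  rw [inversions, Finset.union_product, Finset.filter_union, Finset.card_union_of_disjoint]
  · rfl
  · exact Finset.disjoint_filter_filter (Finset.disjoint_product.mpr (Or.inl h))

theorem inversions_union_right (S : Finset (Fin n)) {T T' : Finset (Fin n)} (h : Disjoint T T') :
    inversions n S (T ∪ T') = inversions n S T + inversions n S T' := by
  rw [inversions, Finset.product_union, Finset.filter_union, Finset.card_union_of_disjoint]
  · rfl
  · exact Finset.disjoint_filter_filter (Finset.disjoint_product.mpr (Or.inr h))

theorem inversions_insert_left {i : Fin n} {S : Finset (Fin n)} (h : i ∉ S)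
    (T : Finset (Fin n)) :
    inversions n (insert i S) T = inversions n {i} T + inversions n S T := by
  rw [Finset.insert_eq, inversions_union_left (Finset.disjoint_singleton_left.mpr h)]

theorem inversions_insert_right (S : Finset (Fin n)) {i : Fin n} {T : Finset (Fin n)}
    (h : i ∉ T) :
    inversions n S (insert i T) = inversions n S {i} + inversions n S T := by
  rw [Finset.insert_eq, inversions_union_right _ (Finset.disjoint_singleton_left.mpr h)]

theorem inversions_add_inversions_comm {S T : Finset (Fin n)} (h : Disjoint S T) :
    inversions n S T + inversions n T S = S.card * T.card := by
  have hswap : inversions n T S = ((S ×ˢ T).filter fun p => ¬p.2 < p.1).card := by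
    refine Finset.card_nbij' Prod.swap Prod.swap ?_ ?_ (fun _ _ => rfl) (fun _ _ => rfl)
    · rintro ⟨t, s⟩ hp
      simp only [Finset.coe_filter, Set.mem_ofPred_eq, Finset.mem_product] at hp
      simp [hp.1.1, hp.1.2, hp.2.le]
    · rintro ⟨s, t⟩ hp
      simp only [Finset.coe_filter, Set.mem_ofPred_eq, Finset.mem_product, not_lt] at hp
      have hne : s ≠ t := fun hst => Finset.disjoint_left.mp h hp.1.1 (hst ▸ hp.1.2)
      simp [hp.1.1, hp.1.2, hp.2.lt_of_ne hne]
  rw [hswap, inversions, Finset.card_filter_add_card_filter_not, Finset.card_product]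

theorem msign_inversions_comm {S T : Finset (Fin n)} (h : Disjoint S T) :
    msign (inversions n S T) = msign (S.card * T.card) * msign (inversions n T S) :=
  msign_eq_mul_of_add_eq (inversions_add_inversions_comm h)

theorem msign_inversions_singleton_comm {i : Fin n} {S : Finset (Fin n)} (h : i ∉ S) :
    msign (inversions n S {i}) = msign S.card * msign (inversions n {i} S) := by
  rw [msign_inversions_comm (Finset.disjoint_singleton_right.mpr h), Finset.card_singleton, mul_one]

theorem mulOp_apply (f g : Lambda n) (U : Finset (Fin n)) :
    mulOp n f g U = ∑ S ∈ U.powerset, msign (inversions n S (U \ S)) * f S * g (U \ S) := rfl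

theorem mulOp_apply_insert (f g : Lambda n) {i : Fin n} {V : Finset (Fin n)} (hi : i ∉ V) :
    mulOp n f g (insert i V) = ∑ S ∈ V.powerset, msign (inversions n S (V \ S)) *
      (msign (inversions n S {i}) * f S * g (insert i (V \ S)) +
        msign (inversions n {i} (V \ S)) * f (insert i S) * g (V \ S)) := by
  rw [mulOp_apply, Finset.sum_powerset_insert hi, ← Finset.sum_add_distrib]
  refine Finset.sum_congr rfl fun S hS => ?_
  have hiS : i ∉ S := fun h => hi (Finset.mem_powerset.mp hS h)
  have hiT : i ∉ V \ S := fun h => hi (Finset.mem_sdiff.mp h).1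
  rw [Finset.insert_sdiff_of_notMem _ hiS, Finset.insert_sdiff_insert,
    Finset.sdiff_insert_of_notMem hi, inversions_insert_right _ hiT, inversions_insert_left hiS,
    msign_add, msign_add]
  ring

theorem mulOp_mono_apply_of_subset (f : Lambda n) {T U : Finset (Fin n)} (h : T ⊆ U) :
    mulOp n f (mono n T) U = msign (inversions n (U \ T) T) * f (U \ T) := by
  rw [mulOp_apply, Finset.sum_eq_single_of_mem (U \ T)]
  · simp [Finset.sdiff_sdiff_eq_self h, mono]
  · exact Finset.mem_powerset.mpr Finset.sdiff_subset
  · intro S hS hne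
    have hT : U \ S ≠ T := by
      rintro rfl
      exact hne (Finset.sdiff_sdiff_eq_self (Finset.mem_powerset.mp hS)).symm
    simp [mono, hT]

theorem mulOp_mono_empty (f : Lambda n) : mulOp n f (mono n ∅) = f := by
  funext U
  simp [mulOp_mono_apply_of_subset f (Finset.empty_subset U), inversions, msign]

theorem evalTop_mulOp_mono (f : Lambda n) (T : Finset (Fin n)) :
    evalTop n (mulOp n f (mono n T)) = msign (inversions n Tᶜ T) * f Tᶜ :=
  mulOp_mono_apply_of_subset f (Finset.subset_univ T)

theorem par_apply (f : Lambda n) (S : Finset (Fin n)) : par n f S = msign S.card * f S := rfl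

/-- For homogeneous `f` and `g` this is `f g = (-1)^{|f||g|} g f`. -/
theorem mulOp_supercomm (f g : Lambda n) :
    mulOp n f g = (2 : ℂ)⁻¹ • (mulOp n (g + par n g) f + mulOp n (g - par n g) (par n f)) := by
  funext U
  simp only [Pi.smul_apply, Pi.add_apply, smul_eq_mul, mulOp_apply, ← Finset.sum_add_distrib,
    Finset.mul_sum]
  refine Finset.sum_bij' (fun S _ => U \ S) (fun S _ => U \ S) ?_ ?_ ?_ ?_ ?_
  · simp
  · simp
  · exact fun S hS => Finset.sdiff_sdiff_eq_self (Finset.mem_powerset.mp hS)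
  · exact fun S hS => Finset.sdiff_sdiff_eq_self (Finset.mem_powerset.mp hS)
  · intro S hS
    rw [Finset.sdiff_sdiff_eq_self (Finset.mem_powerset.mp hS),
      msign_inversions_comm Finset.disjoint_sdiff, mul_comm S.card, msign_mul]
    simp only [par_apply, Pi.sub_apply]
    ring

theorem pd_apply_of_mem {i : Fin n} {S : Finset (Fin n)} (h : i ∈ S) (f : Lambda n) :
    pd n i f S = 0 := if_pos h

theorem pd_apply_of_notMem {i : Fin n} {S : Finset (Fin n)} (h : i ∉ S) (f : Lambda n) :
    pd n i f S = msign (inversions n {i} S) * f (insert i S) := by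
  have hcard : (S.filter (· < i)).card = inversions n {i} S := by
    rw [inversions, Finset.singleton_product, Finset.filter_map, Finset.card_map]
    rfl
  exact (if_neg h).trans (by rw [hcard])

theorem apply_eq_zero_of_pd_eq_zero {i : Fin n} {S : Finset (Fin n)} {f : Lambda n}
    (hf : pd n i f = 0) (hi : i ∈ S) : f S = 0 := by
  have h := congrFun hf (S.erase i)
  rw [pd_apply_of_notMem (Finset.notMem_erase i S), Finset.insert_erase hi] at h
  exact (mul_eq_zero.mp h).resolve_left (msign_ne_zero _)

theorem pd_pd_anticomm (i j : Fin n) (f : Lambda n) : pd n i (pd n j f) = -pd n j (pd n i f) := by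
  funext S
  rw [Pi.neg_apply]
  by_cases hi : i ∈ S
  · simp [pd, hi]
  by_cases hj : j ∈ S
  · simp [pd, hj]
  rcases eq_or_ne i j with rfl | hij
  · simp [pd]
  have hsign : msign (inversions n {i} {j}) = -msign (inversions n {j} {i}) := by
    rw [msign_inversions_singleton_comm (by simpa using hij.symm), Finset.card_singleton,
      msign_one, neg_one_mul]
  rw [pd_apply_of_notMem hi, pd_apply_of_notMem hj, pd_apply_of_notMem (by simp [hj, hij.symm]),
    pd_apply_of_notMem (by simp [hi, hij]), inversions_insert_right _ hi,
    inversions_insert_right _ hj, msign_add, msign_add, hsign, Finset.insert_comm i j]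
  ring

theorem pd_mono_singleton (i m : Fin n) :
    pd n i (mono n {m}) = if i = m then mono n ∅ else 0 := by
  funext S
  by_cases hi : i ∈ S
  · have hS : S ≠ ∅ := Finset.ne_empty_of_mem hi
    rw [pd_apply_of_mem hi]
    split_ifs <;> simp [mono, hS]
  rw [pd_apply_of_notMem hi]
  by_cases h : i = m ∧ S = ∅
  · obtain ⟨rfl, rfl⟩ := h
    simp [mono, inversions, msign]
  · have hne : insert i S ≠ {m} := by
      intro hins
      obtain rfl : i = m := Finset.mem_singleton.mp (hins ▸ Finset.mem_insert_self i S)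
      exact h ⟨rfl, by rw [← Finset.erase_insert hi, hins, Finset.erase_singleton]⟩
    rw [mono, if_neg hne, mul_zero]
    split_ifs with him
    · exact (if_neg fun hS => h ⟨him, hS⟩).symm
    · rfl

theorem par_par (f : Lambda n) : par n (par n f) = f := by
  funext S
  exact (mul_assoc _ _ _).symm.trans (by rw [msign_mul_self, one_mul])

theorem pd_par (i : Fin n) (f : Lambda n) : pd n i (par n f) = -par n (pd n i f) := by
  funext S
  by_cases hi : i ∈ S
  · simp [pd, par, hi]
  · rw [Pi.neg_apply, par_apply, pd_apply_of_notMem hi, pd_apply_of_notMem hi, par_apply,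
      Finset.card_insert_of_notMem hi, msign_add, msign_one]
    ring

theorem par_mulOp (f g : Lambda n) : par n (mulOp n f g) = mulOp n (par n f) (par n g) := by
  funext U
  refine (Finset.mul_sum _ _ _).trans (Finset.sum_congr rfl fun S hS => ?_)
  have hcard : msign U.card = msign S.card * msign (U \ S).card := by
    rw [← msign_add, add_comm, Finset.card_sdiff_add_card_eq_card (Finset.mem_powerset.mp hS)]
  simp only [par_apply, hcard]
  ring

theorem pd_mulOp (i : Fin n) (f g : Lambda n) :
    pd n i (mulOp n f g) = mulOp n (pd n i f) g + mulOp n (par n f) (pd n i g) := by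
  funext U
  rw [Pi.add_apply]
  by_cases hi : i ∈ U
  · obtain ⟨V, hV, rfl⟩ : ∃ V, i ∉ V ∧ insert i V = U :=
      ⟨U.erase i, Finset.notMem_erase i U, Finset.insert_erase hi⟩
    rw [pd_apply_of_mem hi, mulOp_apply_insert _ _ hV, mulOp_apply_insert _ _ hV,
      ← Finset.sum_add_distrib]
    refine (Finset.sum_eq_zero fun S hS => ?_).symm
    have hiS : i ∉ S := fun h => hV (Finset.mem_powerset.mp hS h)
    have hiT : i ∉ V \ S := fun h => hV (Finset.mem_sdiff.mp h).1
    rw [pd_apply_of_mem (Finset.mem_insert_self i S), pd_apply_of_notMem hiS,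
      pd_apply_of_mem (Finset.mem_insert_self i _), pd_apply_of_notMem hiT,
      msign_inversions_singleton_comm hiS]
    simp only [par_apply, Finset.card_insert_of_notMem hiS, msign_add,
      msign_one]
    linear_combination
      msign (inversions n S (V \ S)) * msign S.card * f (insert i S) * g (insert i (V \ S)) *
        (msign_mul_self (inversions n {i} S) - msign_mul_self (inversions n {i} (V \ S)))
  · rw [pd_apply_of_notMem hi, mulOp_apply_insert _ _ hi, mulOp_apply, mulOp_apply,
      ← Finset.sum_add_distrib, Finset.mul_sum]
    refine Finset.sum_congr rfl fun S hS => ?_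
    have hiS : i ∉ S := fun h => hi (Finset.mem_powerset.mp hS h)
    have hiT : i ∉ U \ S := fun h => hi (Finset.mem_sdiff.mp h).1
    have hU : msign (inversions n {i} U) =
        msign (inversions n {i} S) * msign (inversions n {i} (U \ S)) := by
      rw [← msign_add, ← inversions_union_right _ Finset.disjoint_sdiff,
        Finset.union_sdiff_of_subset (Finset.mem_powerset.mp hS)]
    rw [pd_apply_of_notMem hiS, pd_apply_of_notMem hiT, msign_inversions_singleton_comm hiS, hU]
    simp only [par_apply]
    linear_combination msign (inversions n S (U \ S)) *
      (msign S.card * msign (inversions n {i} (U \ S)) * f S * g (insert i (U \ S)) *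
          msign_mul_self (inversions n {i} S) +
        msign (inversions n {i} S) * f (insert i S) * g (U \ S) *
          msign_mul_self (inversions n {i} (U \ S)))

theorem par_mem_ldeg_iff {m : ℤ} {f : Lambda n} : par n f ∈ ldeg n m ↔ f ∈ ldeg n m :=
  forall₂_congr fun S _ => by rw [par_apply, mul_eq_zero, or_iff_right (msign_ne_zero _)]

theorem mono_mem_ldeg (S : Finset (Fin n)) : mono n S ∈ ldeg n S.card := by
  intro T hT
  exact if_neg fun h => hT (by rw [h])

theorem pd_mem_ldeg {m : ℤ} {f : Lambda n} (hf : f ∈ ldeg n m) (i : Fin n) :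
    pd n i f ∈ ldeg n (m - 1) := by
  intro S hS
  by_cases hi : i ∈ S
  · exact pd_apply_of_mem hi f
  · have hcard : ((insert i S).card : ℤ) ≠ m := by
      rw [Finset.card_insert_of_notMem hi]
      push_cast
      omega
    rw [pd_apply_of_notMem hi, hf _ hcard, mul_zero]

theorem mulOp_mem_ldeg {a b : ℤ} {f g : Lambda n} (hf : f ∈ ldeg n a) (hg : g ∈ ldeg n b) :
    mulOp n f g ∈ ldeg n (a + b) := by
  intro U hU
  refine Finset.sum_eq_zero fun S hS => ?_
  by_cases hSa : (S.card : ℤ) = a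
  · have hcard := Finset.card_sdiff_add_card_eq_card (Finset.mem_powerset.mp hS)
    rw [hg (U \ S) (by omega), mul_zero]
  · rw [hf S hSa, mul_zero, zero_mul]

theorem cidx_involutive : Function.Involutive (cidx n) := by
  intro i
  apply Fin.ext
  have := i.isLt
  simp only [cidx]
  split_ifs <;> omega

theorem sum_cidx {M : Type*} [AddCommMonoid M] (F : Fin n → M) :
    ∑ i, F (cidx n i) = ∑ i, F i :=
  Equiv.sum_comp cidx_involutive.toPerm F

theorem DHmap_apply (f g : Lambda n) :
    DHmap n f g = ∑ i, mulOp n (pd n i (par n f)) (pd n (cidx n i) g) := by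
  simp [DHmap]

theorem DHmap_apply_mono_singleton (f : Lambda n) (m : Fin n) :
    DHmap n f (mono n {m}) = pd n (cidx n m) (par n f) := by
  rw [DHmap_apply, ← sum_cidx, Finset.sum_eq_single m]
  · rw [cidx_involutive, pd_mono_singleton, if_pos rfl, mulOp_mono_empty]
  · intro i _ hi
    rw [cidx_involutive, pd_mono_singleton, if_neg hi, map_zero]
  · simp

theorem DHmap_eq_zero_of_pd_eq_zero {f : Lambda n} (hf : ∀ i, pd n i f = 0) : DHmap n f = 0 := by
  refine LinearMap.ext fun g => ?_
  simp [DHmap_apply, pd_par, hf]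

theorem DHmap_mem_edeg {p : ℤ} {f : Lambda n} (hf : f ∈ ldeg n p) :
    DHmap n f ∈ edeg n (p - 2) := by
  intro m g hg
  rw [DHmap_apply, show m + (p - 2) = p - 1 + (m - 1) by ring]
  exact Submodule.sum_mem _ fun i _ =>
    mulOp_mem_ldeg (pd_mem_ldeg (par_mem_ldeg_iff.mpr hf) i) (pd_mem_ldeg hg _)

theorem pd_mem_ldeg_of_DHmap_mem_edeg {d : ℤ} {f : Lambda n} (hf : DHmap n f ∈ edeg n d)
    (i : Fin n) : pd n i f ∈ ldeg n (d + 1) := by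
  have h := hf _ _ (mono_mem_ldeg {cidx n i})
  rw [DHmap_apply_mono_singleton, cidx_involutive, pd_par, Submodule.neg_mem_iff,
    par_mem_ldeg_iff, Finset.card_singleton, Nat.cast_one, add_comm] at h
  exact h

theorem par_DHmap (f g : Lambda n) : par n (DHmap n f g) = DHmap n (par n f) (par n g) := by
  simp only [DHmap_apply, map_sum, par_mulOp, pd_par, map_neg, LinearMap.neg_apply, neg_neg]

theorem pd_DHmap (j : Fin n) (f g : Lambda n) :
    pd n j (DHmap n f g) = DHmap n (pd n j f) g + DHmap n (par n f) (pd n j g) := by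
  simp only [DHmap_apply, map_sum, ← Finset.sum_add_distrib]
  refine Finset.sum_congr rfl fun i _ => ?_
  have hleft : pd n j (pd n i (par n f)) = pd n i (par n (pd n j f)) := by
    rw [pd_pd_anticomm, pd_par j, map_neg, neg_neg]
  rw [pd_mulOp, hleft, pd_pd_anticomm j (cidx n i), ← neg_neg (par n (pd n i (par n f))), ← pd_par,
    map_neg, map_neg, LinearMap.neg_apply, neg_neg]

/-- For homogeneous `f` and `g` this is `{f, g} = -(-1)^{|f||g|} {g, f}`, where
`{f, g} = D_H(f)(g)`. -/
theorem DHmap_skew_supersymm (f g : Lambda n) :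
    DHmap n f g =
      -((2 : ℂ)⁻¹ • (DHmap n (g + par n g) f + DHmap n (g - par n g) (par n f))) := by
  rw [DHmap_apply f, DHmap_apply _ f, DHmap_apply _ (par n f), ← sum_cidx,
    ← Finset.sum_add_distrib, Finset.smul_sum, ← Finset.sum_neg_distrib]
  refine Finset.sum_congr rfl fun i _ => ?_
  rw [cidx_involutive, mulOp_supercomm]
  simp only [pd_par, map_add, map_sub, map_neg, par_par, LinearMap.add_apply,
    LinearMap.sub_apply, LinearMap.neg_apply]
  module

theorem par_mul_DHmap_mul_par (f : Lambda n) : par n * DHmap n f * par n = DHmap n (par n f) := by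
  refine LinearMap.ext fun v => ?_
  rw [Module.End.mul_apply, Module.End.mul_apply, par_DHmap, par_par]

theorem sbL_DHmap (f g : Lambda n) :
    sbL n (DHmap n f) (DHmap n g) = DHmap n f * DHmap n g - (2 : ℂ)⁻¹ •
      (DHmap n (g + par n g) * DHmap n f + DHmap n (g - par n g) * DHmap n (par n f)) := by
  change sbFun n _ _ = _
  rw [sbFun, par_mul_DHmap_mul_par, par_mul_DHmap_mul_par, map_add, map_sub]

theorem sbL_DHmap_apply_mono_singleton (f g : Lambda n) (m : Fin n) :
    sbL n (DHmap n f) (DHmap n g) (mono n {m}) = DHmap n (DHmap n f g) (mono n {m}) := by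
  set j := cidx n m
  have hskew := DHmap_skew_supersymm (pd n j (par n f)) (par n g)
  have hpd : par n (pd n j (par n f)) = -pd n j f := by
    rw [← neg_eq_iff_eq_neg, ← pd_par, par_par]
  have hright : DHmap n (DHmap n f g) (mono n {m}) =
      DHmap n (pd n j (par n f)) (par n g) + DHmap n f (pd n j (par n g)) := by
    rw [DHmap_apply_mono_singleton, par_DHmap, pd_DHmap, par_par]
  rw [par_par, hpd] at hskew
  rw [hright, hskew, sbL_DHmap]
  simp only [LinearMap.sub_apply, LinearMap.add_apply, LinearMap.smul_apply,
    Module.End.mul_apply, DHmap_apply_mono_singleton, par_par, map_add, map_sub, map_neg]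
  module

theorem DHmap_apply_eq_neg_sum_pd (f g : Lambda n) :
    DHmap n f g = -∑ i, pd n (cidx n i) (mulOp n (pd n i f) g) := by
  have hlaplacian : ∑ i, mulOp n (pd n (cidx n i) (pd n i f)) g = 0 := by
    refine self_eq_neg.mp ?_
    conv_lhs => rw [← sum_cidx]
    rw [← Finset.sum_neg_distrib]
    refine Finset.sum_congr rfl fun i _ => ?_
    rw [cidx_involutive, pd_pd_anticomm, map_neg, LinearMap.neg_apply]
  simp only [pd_mulOp, Finset.sum_add_distrib, hlaplacian, zero_add, DHmap_apply, pd_par, map_neg,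
    LinearMap.neg_apply, Finset.sum_neg_distrib]

theorem DHmap_apply_compl_singleton (f g : Lambda n) (i : Fin n) :
    DHmap n f g {cidx n i}ᶜ =
      -(msign (inversions n {cidx n i} {cidx n i}ᶜ) * evalTop n (mulOp n (pd n i f) g)) := by
  rw [DHmap_apply_eq_neg_sum_pd, Pi.neg_apply, Finset.sum_apply, Finset.sum_eq_single i]
  · rw [pd_apply_of_notMem (by simp), Finset.insert_compl_self]
    rfl
  · intro j _ hj
    exact pd_apply_of_mem (by simpa using cidx_involutive.injective.ne hj) _
  · simp

theorem DHmap_apply_eq_zero_of_sbL_eq_zero {f g : Lambda n}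
    (h : sbL n (DHmap n f) (DHmap n g) = 0) {S : Finset (Fin n)} (hS : S.Nonempty) :
    DHmap n f g S = 0 := by
  obtain ⟨i, hi⟩ := hS
  have hgen := sbL_DHmap_apply_mono_singleton f g (cidx n i)
  rw [h, LinearMap.zero_apply, DHmap_apply_mono_singleton, cidx_involutive] at hgen
  have hpar := apply_eq_zero_of_pd_eq_zero hgen.symm hi
  exact (mul_eq_zero.mp hpar).resolve_left (msign_ne_zero _)

theorem evalTop_mulOp_pd_eq_zero_of_sbL_eq_zero [Nontrivial (Fin n)] {f g : Lambda n}
    (h : sbL n (DHmap n f) (DHmap n g) = 0) (i : Fin n) :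
    evalTop n (mulOp n (pd n i f) g) = 0 := by
  have hne : ({cidx n i}ᶜ : Finset (Fin n)).Nonempty := by
    obtain ⟨j, hj⟩ := exists_ne (cidx n i)
    exact ⟨j, by simpa using hj⟩
  have hzero := DHmap_apply_eq_zero_of_sbL_eq_zero h hne
  rw [DHmap_apply_compl_singleton, neg_eq_zero] at hzero
  exact (mul_eq_zero.mp hzero).resolve_left (msign_ne_zero _)

theorem DHmap_mono_mem_grade {T : Finset (Fin n)} (hT : T ≠ Finset.univ) :
    DHmap n (mono n T) ∈ CT.H.grade n (T.card - 2) :=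
  ⟨⟨mono n T, if_neg hT.symm, rfl⟩, DHmap_mem_edeg (mono_mem_ldeg T)⟩

theorem pd_apply_eq_zero_of_sbL_eq_zero {f : Lambda n} {i : Fin n} {S : Finset (Fin n)}
    (hS : S.Nonempty) (h : sbL n (DHmap n f) (DHmap n (mono n Sᶜ)) = 0) : pd n i f S = 0 := by
  by_cases hi : i ∈ S
  · exact pd_apply_of_mem hi f
  obtain ⟨j, hj⟩ := hS
  have : Nontrivial (Fin n) := ⟨j, i, ne_of_mem_of_not_mem hj hi⟩
  have htop := evalTop_mulOp_pd_eq_zero_of_sbL_eq_zero h i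
  rw [evalTop_mulOp_mono, compl_compl] at htop
  exact (mul_eq_zero.mp htop).resolve_left (msign_ne_zero _)

theorem Hn_top_pairing_nondegenerate_general {k l : ℤ} (hk : 0 ≤ k) (hkl : k + l = (n : ℤ) - 3)
    {x : E n} (hx : x ∈ CT.H.grade n k) (hzero : ∀ y ∈ CT.H.grade n l, sbL n x y = 0) :
    x = 0 := by
  obtain ⟨⟨f, -, rfl⟩, hdeg⟩ := hx
  refine DHmap_eq_zero_of_pd_eq_zero fun i => funext fun S => ?_
  by_cases hcard : (S.card : ℤ) = k + 1
  · have hS : S.Nonempty := Finset.card_pos.mp (by omega)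
    have hgrade := DHmap_mono_mem_grade (T := Sᶜ) (by simpa using hS.ne_empty)
    have hl : (Sᶜ.card : ℤ) - 2 = l := by
      have := S.card_add_card_compl
      rw [Fintype.card_fin] at this
      omega
    rw [hl] at hgrade
    exact pd_apply_eq_zero_of_sbL_eq_zero hS (hzero _ hgrade)
  · exact pd_mem_ldeg_of_DHmap_mem_edeg hdeg i S hcard

end

/-- Let `n > 4`, `L = H(n)` with `ξ_H = n − 3`, and `−1 ≤ k, l ≤ ξ_H` with
`k + l = ξ_H`. If `x ∈ L_k` satisfies `[x, L_l] = 0`, then `x = 0`. -/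
theorem Hn_top_pairing_nondegenerate (n : ℕ) (hn : 4 < n) (k l : ℤ)
    (hk : -1 ≤ k) (hk' : k ≤ (n : ℤ) - 3) (hl : -1 ≤ l) (hl' : l ≤ (n : ℤ) - 3)
    (hkl : k + l = (n : ℤ) - 3)
    (x : E n) (hx : x ∈ CT.H.grade n k)
    (hzero : ∀ y ∈ CT.H.grade n l, sbL n x y = 0) :
    x = 0 :=
  Hn_top_pairing_nondegenerate_general (by omega) hkl hx hzero

end CartanSuper
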